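/- Let n ∈ ℕ, ε > 0, and let φ, φ̂ : ℝⁿ × ℝ → ℝ be twice continuously differentiable in x and continuously differentiable in t, with φ everywhere positive, satisfying the forward–backward heat system ∂φ/∂t = −εΔφ and ∂φ̂/∂t = εΔφ̂ at every (x,t). Then the product ρ(x,t) := φ(x,t)·φ̂(x,t) satisfies the controlled Fokker–Planck equation with the feedback control u = 2ε∇log φ: at every (x,t), ∂ρ/∂t + ∇·( ρ · 2ε∇(log φ) ) = εΔρ. -/

import Mathlib

open scoped BigOperators

/-- Partial derivative in the `i`-th coordinate direction of a scalar function on `ℝⁿ`. -/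
noncomputable def pd {n : ℕ} (i : Fin n) (f : EuclideanSpace ℝ (Fin n) → ℝ)
    (x : EuclideanSpace ℝ (Fin n)) : ℝ :=
  fderiv ℝ f x (EuclideanSpace.single i 1)

theorem pd_mul {n : ℕ} (i : Fin n) (f g : EuclideanSpace ℝ (Fin n) → ℝ)
    (x : EuclideanSpace ℝ (Fin n)) (hf : DifferentiableAt ℝ f x) (hg : DifferentiableAt ℝ g x) :
    pd i (fun y => f y * g y) x = f x * pd i g x + g x * pd i f x := by
  unfold pd
  rw [fderiv_fun_mul hf hg]
  simp

theorem pd_add {n : ℕ} (i : Fin n) (f g : EuclideanSpace ℝ (Fin n) → ℝ)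
    (x : EuclideanSpace ℝ (Fin n)) (hf : DifferentiableAt ℝ f x) (hg : DifferentiableAt ℝ g x) :
    pd i (fun y => f y + g y) x = pd i f x + pd i g x := by
  unfold pd
  rw [fderiv_fun_add hf hg]
  simp

theorem pd_const_mul {n : ℕ} (i : Fin n) (c : ℝ) (f : EuclideanSpace ℝ (Fin n) → ℝ)
    (x : EuclideanSpace ℝ (Fin n)) (hf : DifferentiableAt ℝ f x) :
    pd i (fun y => c * f y) x = c * pd i f x := by
  unfold pd
  rw [fderiv_const_mul hf]
  simp

theorem pd_log {n : ℕ} (i : Fin n) (f : EuclideanSpace ℝ (Fin n) → ℝ)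
    (x : EuclideanSpace ℝ (Fin n)) (hf : DifferentiableAt ℝ f x) (h : f x ≠ 0) :
    pd i (fun y => Real.log (f y)) x = (f x)⁻¹ * pd i f x := by
  unfold pd
  rw [fderiv.log hf h]
  simp

theorem pd_differentiable {n : ℕ} (i : Fin n) (f : EuclideanSpace ℝ (Fin n) → ℝ)
    (hf : ContDiff ℝ 2 f) : Differentiable ℝ (fun y => pd i f y) := by
  have h : ContDiff ℝ 1 (fderiv ℝ f) := hf.fderiv_right (by norm_num)
  exact (h.differentiable one_ne_zero).clm_apply (differentiable_const _)

/-- if `φ` and `φ̂` solve the forward–backward heat system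
`∂φ/∂t = −εΔφ`, `∂φ̂/∂t = εΔφ̂` with `φ > 0`, then `ρ = φ·φ̂` satisfies the
controlled Fokker–Planck equation with feedback control `u = 2ε∇ log φ`:
`∂ρ/∂t + ∇·(ρ·2ε∇ log φ) = εΔρ`. -/
theorem product_of_schrodinger_factors_solves_controlled_fpk
    (n : ℕ) (ε : ℝ) (hε : 0 < ε)
    (φ φhat : EuclideanSpace ℝ (Fin n) → ℝ → ℝ)
    (hpos : ∀ x t, 0 < φ x t)
    (hφx : ∀ t, ContDiff ℝ 2 fun x => φ x t)
    (hφt : ∀ x, ContDiff ℝ 1 fun t => φ x t)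
    (hφhatx : ∀ t, ContDiff ℝ 2 fun x => φhat x t)
    (hφhatt : ∀ x, ContDiff ℝ 1 fun t => φhat x t)
    (hbackward : ∀ (x : EuclideanSpace ℝ (Fin n)) (t : ℝ),
      deriv (fun τ => φ x τ) t
        = -ε * ∑ i, pd i (fun y => pd i (fun z => φ z t) y) x)
    (hforward : ∀ (x : EuclideanSpace ℝ (Fin n)) (t : ℝ),
      deriv (fun τ => φhat x τ) t
        = ε * ∑ i, pd i (fun y => pd i (fun z => φhat z t) y) x)
    (ρ : EuclideanSpace ℝ (Fin n) → ℝ → ℝ)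
    (hρ : ∀ x t, ρ x t = φ x t * φhat x t) :
    ∀ (x : EuclideanSpace ℝ (Fin n)) (t : ℝ),
      deriv (fun τ => ρ x τ) t
        + (∑ i, pd i (fun y => ρ y t *
            (2 * ε * pd i (fun z => Real.log (φ z t)) y)) x)
        = ε * ∑ i, pd i (fun y => pd i (fun z => ρ z t) y) x := by
  intro x t
  have hr : ρ = fun x t => φ x t * φhat x t := by
    funext x t
    exact hρ x t
  subst hr
  have df : Differentiable ℝ fun x => φ x t := (hφx t).differentiable two_ne_zero
  have dg : Differentiable ℝ fun x => φhat x t := (hφhatx t).differentiable two_ne_zero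
  have df' := fun i => pd_differentiable i _ (hφx t)
  have dg' := fun i => pd_differentiable i _ (hφhatx t)
  have ht : deriv (fun τ => φ x τ * φhat x τ) t
      = deriv (fun τ => φ x τ) t * φhat x t + φ x t * deriv (fun τ => φhat x τ) t :=
    deriv_fun_mul ((hφt x).differentiable one_ne_zero t) ((hφhatt x).differentiable one_ne_zero t)
  have h1 : ∀ i, pd i (fun y => φ y t * φhat y t *
      (2 * ε * pd i (fun z => Real.log (φ z t)) y)) x
      = 2 * ε * (φhat x t * pd i (fun y => pd i (fun z => φ z t) y) x
        + pd i (fun z => φ z t) x * pd i (fun z => φhat z t) x) := by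
    intro i
    have e : (fun y => φ y t * φhat y t * (2 * ε * pd i (fun z => Real.log (φ z t)) y))
        = fun y => 2 * ε * (φhat y t * pd i (fun z => φ z t) y) := by
      funext y
      have hp := (hpos y t).ne'
      rw [pd_log i _ y (df y) hp]
      field_simp
    rw [e, pd_const_mul i _ _ x ((dg x).fun_mul (df' i x)), pd_mul i _ _ x (dg x) (df' i x)]
  have h2 : ∀ i, pd i (fun y => pd i (fun z => φ z t * φhat z t) y) x
      = φ x t * pd i (fun y => pd i (fun z => φhat z t) y) x
        + φhat x t * pd i (fun y => pd i (fun z => φ z t) y) x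
        + 2 * (pd i (fun z => φ z t) x * pd i (fun z => φhat z t) x) := by
    intro i
    have e : (fun y => pd i (fun z => φ z t * φhat z t) y)
        = fun y => φ y t * pd i (fun z => φhat z t) y + φhat y t * pd i (fun z => φ z t) y := by
      funext y
      exact pd_mul i _ _ y (df y) (dg y)
    rw [e, pd_add i _ _ x ((df x).fun_mul (dg' i x)) ((dg x).fun_mul (df' i x)),
      pd_mul i _ _ x (df x) (dg' i x), pd_mul i _ _ x (dg x) (df' i x)]
    ring
  simp only [h1, h2, ht, hbackward, hforward, Finset.sum_add_distrib, ← Finset.mul_sum]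
  ring
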